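/- arXiv:1603.00180 — 5 statements merged into one kernel-verified Lean document; each statement's English description precedes it below -/
import Mathlib

section
/- Let X be a set, let f_k, g_k : X → ℝ be sequences of real-valued functions, let f, g : X → ℝ, let r₁, r₂ ≥ 0 be real numbers, and let α, β ∈ ℝ. If (f_k) is pointwise rough statistically convergent to f on X with roughness degree r₁ and (g_k) is pointwise rough statistically convergent to g on X with roughness degree r₂, then the sequence (α·f_k + β·g_k) is pointwise rough statistically convergent to α·f + β·g on X with roughness degree |α|·r₁ + |β|·r₂. -/
open scoped Classical

/-- The set `A ⊆ ℕ` has natural density `d`. -/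
def natDensity (A : Set ℕ) (d : ℝ) : Prop :=
  Filter.Tendsto
    (fun n => (((Finset.range n).filter (fun k => k ∈ A)).card : ℝ) / (n : ℝ))
    Filter.atTop (nhds d)

theorem natDensity_zero_of_subset_union {A B C : Set ℕ} (hA : natDensity A 0)
    (hB : natDensity B 0) (h : C ⊆ A ∪ B) : natDensity C 0 := by
  unfold natDensity at *
  have hAB := hA.add hB
  rw [add_zero] at hAB
  refine squeeze_zero (fun n => by positivity) (fun n => ?_) hAB
  rw [← add_div]
  apply div_le_div_of_nonneg_right _ (Nat.cast_nonneg n)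
  rw [← Nat.cast_add, Nat.cast_le]
  refine le_trans (Finset.card_le_card ?_) (Finset.card_union_le _ _)
  intro k hk
  simp only [Finset.mem_union, Finset.mem_filter] at hk ⊢
  rcases h hk.2 with h1 | h1
  · exact Or.inl ⟨hk.1, h1⟩
  · exact Or.inr ⟨hk.1, h1⟩

theorem stmt_0 {X : Type*} (f g : ℕ → X → ℝ) (F G : X → ℝ) (r₁ r₂ : ℝ)
    (hr₁ : 0 ≤ r₁) (hr₂ : 0 ≤ r₂) (α β : ℝ)
    (hf : ∀ x : X, ∀ ε > (0 : ℝ), natDensity {k : ℕ | r₁ + ε ≤ |f k x - F x|} 0)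
    (hg : ∀ x : X, ∀ ε > (0 : ℝ), natDensity {k : ℕ | r₂ + ε ≤ |g k x - G x|} 0) :
    ∀ x : X, ∀ ε > (0 : ℝ),
      natDensity
        {k : ℕ | |α| * r₁ + |β| * r₂ + ε ≤ |(α * f k x + β * g k x) - (α * F x + β * G x)|}
        0 := by
  intro x ε hε
  have hα := abs_nonneg α
  have hβ := abs_nonneg β
  have hs : 0 < |α| + |β| + 1 := by positivity
  have hδ : 0 < ε / (|α| + |β| + 1) := by positivity
  have hδe : ε / (|α| + |β| + 1) * (|α| + |β| + 1) = ε := div_mul_cancel₀ _ hs.ne'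
  generalize ε / (|α| + |β| + 1) = δ at hδ hδe
  refine natDensity_zero_of_subset_union (hf x δ hδ) (hg x δ hδ) ?_
  intro k hk
  by_contra hc
  simp only [Set.mem_union, Set.mem_setOf_eq, not_or, not_le] at hc hk
  have h1 := mul_le_mul_of_nonneg_left hc.1.le hα
  have h2 := mul_le_mul_of_nonneg_left hc.2.le hβ
  have h3 : |(α * f k x + β * g k x) - (α * F x + β * G x)|
      ≤ |α| * |f k x - F x| + |β| * |g k x - G x| := by
    rw [← abs_mul, ← abs_mul]
    refine le_trans (le_of_eq ?_) (abs_add_le _ _)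
    congr 1
    ring
  nlinarith
end

section
/- Let X be a set, let f_k, g_k : X → ℝ be sequences of real-valued functions, let f, g : X → ℝ, and let r₁, r₂ ≥ 0 be real numbers. If (f_k) is pointwise rough statistically convergent to f on X with roughness degree r₁ and (g_k) is pointwise rough statistically convergent to g on X with roughness degree r₂, then the sequence (f_k + g_k) is pointwise rough statistically convergent to f + g on X with roughness degree r₁ + r₂. -/
open scoped Classical

theorem stmt_1 {X : Type*} (f g : ℕ → X → ℝ) (F G : X → ℝ) (r₁ r₂ : ℝ)
    (hr₁ : 0 ≤ r₁) (hr₂ : 0 ≤ r₂)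
    (hf : ∀ x : X, ∀ ε > (0 : ℝ), natDensity {k : ℕ | r₁ + ε ≤ |f k x - F x|} 0)
    (hg : ∀ x : X, ∀ ε > (0 : ℝ), natDensity {k : ℕ | r₂ + ε ≤ |g k x - G x|} 0) :
    ∀ x : X, ∀ ε > (0 : ℝ),
      natDensity {k : ℕ | r₁ + r₂ + ε ≤ |(f k x + g k x) - (F x + G x)|} 0 := by
  intro x ε hε
  have h1 := hf x (ε / 2) (half_pos hε)
  have h2 := hg x (ε / 2) (half_pos hε)
  unfold natDensity at *
  have h3 := h1.add h2
  rw [add_zero] at h3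
  refine squeeze_zero (fun n => by positivity) (fun n => ?_) h3
  rw [← add_div]
  refine div_le_div_of_nonneg_right ?_ (Nat.cast_nonneg n)
  rw [← Nat.cast_add]
  refine Nat.cast_le.mpr (le_trans (Finset.card_le_card ?_) (Finset.card_union_le _ _))
  intro k hk
  simp only [Finset.mem_union, Finset.mem_filter, Set.mem_setOf_eq] at hk ⊢
  obtain ⟨hk1, hk2⟩ := hk
  by_cases h : r₁ + ε / 2 ≤ |f k x - F x|
  · exact Or.inl ⟨hk1, h⟩
  · refine Or.inr ⟨hk1, ?_⟩
    have h4 := abs_add_le (f k x - F x) (g k x - G x)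
    have h5 : f k x - F x + (g k x - G x) = (f k x + g k x) - (F x + G x) := by ring
    rw [h5] at h4
    linarith
end

section
/- Let X be a set, let f_k : X → ℝ be a sequence of real-valued functions, let f : X → ℝ, and let r ≥ 0 be a real number. If (f_k) is pointwise rough statistically convergent to f on X with roughness degree r, then (f_k) is pointwise rough statistically Cauchy on X with roughness degree 2r; that is, for every x ∈ X and every ε > 0 there exists N ∈ ℕ such that the set {k ∈ ℕ : |f_k(x) − f_N(x)| ≥ 2r + ε} has natural density 0. -/
open scoped Classical

theorem stmt_3 {X : Type*} (f : ℕ → X → ℝ) (F : X → ℝ) (r : ℝ) (hr : 0 ≤ r)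
    (hf : ∀ x : X, ∀ ε > (0 : ℝ), natDensity {k : ℕ | r + ε ≤ |f k x - F x|} 0) :
    ∀ x : X, ∀ ε > (0 : ℝ),
      ∃ N : ℕ, natDensity {k : ℕ | 2 * r + ε ≤ |f k x - f N x|} 0 := by
  intro x ε hε
  have h := hf x (ε / 2) (by linarith)
  have hN : ∃ N : ℕ, |f N x - F x| < r + ε / 2 := by
    by_contra hcon
    push Not at hcon
    have h1 : Filter.Tendsto (fun n : ℕ => (((Finset.range n).filter
        (fun k => k ∈ {k : ℕ | r + ε / 2 ≤ |f k x - F x|})).card : ℝ) / (n : ℝ))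
        Filter.atTop (nhds 1) := by
      refine tendsto_const_nhds.congr' ?_
      filter_upwards [Filter.eventually_gt_atTop 0] with n hn
      have hn' : (n : ℝ) ≠ 0 := by positivity
      rw [Finset.filter_true_of_mem (fun k _ => hcon k), Finset.card_range, div_self hn']
    exact zero_ne_one (tendsto_nhds_unique h h1)
  obtain ⟨N, hN⟩ := hN
  refine ⟨N, ?_⟩
  unfold natDensity at h ⊢
  refine squeeze_zero (fun n => by positivity) (fun n => ?_) h
  refine div_le_div_of_nonneg_right (Nat.cast_le.mpr (Finset.card_le_card
    (Finset.monotone_filter_right _ ?_))) (Nat.cast_nonneg n)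
  intro k _ hk
  simp only [Set.mem_setOf_eq] at hk ⊢
  have := abs_sub_le (f k x) (F x) (f N x)
  rw [abs_sub_comm (F x)] at this
  linarith
end

section
/- Let x_k be a sequence of real numbers and let r ≥ 0 be a real number. If (x_k) is rough statistically Cauchy with roughness degree r (i.e., for every ε > 0 there exists N ∈ ℕ such that the set {k ∈ ℕ : |x_k − x_N| ≥ r + ε} has natural density 0), then there exists a real number ξ such that (x_k) is rough statistically convergent to ξ with roughness degree 2r (i.e., for every ε > 0 the set {k ∈ ℕ : |x_k − ξ| ≥ 2r + ε} has natural density 0). -/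
open scoped Classical

theorem natDensity_zero_mono {A B : Set ℕ} (h : A ⊆ B) (hB : natDensity B 0) :
    natDensity A 0 := by
  unfold natDensity at *
  refine squeeze_zero (fun n => by positivity) (fun n => ?_) hB
  have : ((Finset.range n).filter (fun k => k ∈ A)).card ≤
      ((Finset.range n).filter (fun k => k ∈ B)).card :=
    Finset.card_le_card (Finset.monotone_filter_right _ (fun k _ hk => h hk))
  gcongr

theorem exists_notMem_of_natDensity_zero {A B : Set ℕ} (hA : natDensity A 0)
    (hB : natDensity B 0) : ∃ k, k ∉ A ∧ k ∉ B := by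
  by_contra hcon
  have hc : ∀ k, k ∈ A ∨ k ∈ B := by
    intro k
    by_contra h
    exact hcon ⟨k, fun h1 => h (Or.inl h1), fun h1 => h (Or.inr h1)⟩
  unfold natDensity at *
  have h := hA.add hB
  have h1 := h.eventually (gt_mem_nhds (show (0:ℝ) + 0 < 1 by norm_num))
  obtain ⟨n, hn, hpos⟩ := (h1.and (Filter.eventually_gt_atTop 0)).exists
  have hcard : n ≤ ((Finset.range n).filter (fun k => k ∈ A)).card +
      ((Finset.range n).filter (fun k => k ∈ B)).card := by
    calc n = (Finset.range n).card := by simp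
      _ ≤ ((Finset.range n).filter (fun k => k ∈ A) ∪
            (Finset.range n).filter (fun k => k ∈ B)).card := by
          apply Finset.card_le_card
          intro k hk
          rw [Finset.mem_union, Finset.mem_filter, Finset.mem_filter]
          exact (hc k).imp (fun h => ⟨hk, h⟩) (fun h => ⟨hk, h⟩)
      _ ≤ _ := Finset.card_union_le _ _
  have hpos' : (0:ℝ) < n := by exact_mod_cast hpos
  rw [← add_div, div_lt_one hpos'] at hn
  have : (n:ℝ) ≤ (((Finset.range n).filter (fun k => k ∈ A)).card : ℝ) +
      (((Finset.range n).filter (fun k => k ∈ B)).card : ℝ) := by exact_mod_cast hcard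
  linarith

theorem stmt_4 (x : ℕ → ℝ) (r : ℝ) (hr : 0 ≤ r)
    (hx : ∀ ε > (0 : ℝ), ∃ N : ℕ, natDensity {k : ℕ | r + ε ≤ |x k - x N|} 0) :
    ∃ ξ : ℝ, ∀ ε > (0 : ℝ), natDensity {k : ℕ | 2 * r + ε ≤ |x k - ξ|} 0 := by
  have hx' : ∀ m : ℕ, ∃ N : ℕ, natDensity {k : ℕ | r + 1 / ((m : ℝ) + 1) ≤ |x k - x N|} 0 :=
    fun m => hx _ (by positivity)
  choose N hN using hx'
  have hb : ∀ m : ℕ, x (N m) ∈ Metric.closedBall (x (N 0)) (2 * r + 2) := by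
    intro m
    obtain ⟨k, h1, h2⟩ := exists_notMem_of_natDensity_zero (hN m) (hN 0)
    simp only [Set.mem_setOf_eq, not_le] at h1 h2
    have h3 : 1 / ((m : ℝ) + 1) ≤ 1 := by
      rw [div_le_one (by positivity)]
      have : (0:ℝ) ≤ m := by positivity
      linarith
    norm_num at h2
    rw [Metric.mem_closedBall, Real.dist_eq]
    rw [abs_lt] at h1 h2
    rw [abs_le]
    constructor <;> linarith [h1.1, h1.2, h2.1, h2.2]
  obtain ⟨ξ, -, φ, hφ, hlim⟩ :=
    tendsto_subseq_of_bounded Metric.isBounded_closedBall hb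
  refine ⟨ξ, fun ε hε => ?_⟩
  have e1 := (Metric.tendsto_nhds.1 hlim) (ε / 2) (by positivity)
  have e2 := (tendsto_one_div_add_atTop_nhds_zero_nat (𝕜 := ℝ)).comp hφ.tendsto_atTop
  have e3 := e2.eventually (gt_mem_nhds (show (0:ℝ) < ε / 2 by positivity))
  obtain ⟨m, hm1, hm2⟩ := (e1.and e3).exists
  refine natDensity_zero_mono ?_ (hN (φ m))
  intro k hk
  simp only [Set.mem_setOf_eq, Function.comp_apply, Real.dist_eq] at *
  have := abs_sub_le (x k) (x (N (φ m))) ξ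
  linarith
end

section
/- Let X be a set, let f_k, g_k : X → ℝ be sequences of real-valued functions, let f : X → ℝ, and let r ≥ 0 be a real number. Suppose that for every x ∈ X the set {k ∈ ℕ : f_k(x) ≠ g_k(x)} has natural density 0, and that (g_k) is pointwise rough convergent (in the ordinary sense) to f on X with roughness degree r, i.e., for every x ∈ X and every ε > 0 there exists N ∈ ℕ such that |g_k(x) − f(x)| < r + ε for all k ≥ N. Then (f_k) is pointwise rough statistically convergent to f on X with roughness degree r. -/
open scoped Classical

theorem stmt_7 {X : Type*} (f g : ℕ → X → ℝ) (F : X → ℝ) (r : ℝ) (hr : 0 ≤ r)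
    (heq : ∀ x : X, natDensity {k : ℕ | f k x ≠ g k x} 0)
    (hg : ∀ x : X, ∀ ε > (0 : ℝ), ∃ N : ℕ, ∀ k ≥ N, |g k x - F x| < r + ε) :
    ∀ x : X, ∀ ε > (0 : ℝ), natDensity {k : ℕ | r + ε ≤ |f k x - F x|} 0 := by
  intro x ε hε
  obtain ⟨N, hN⟩ := hg x ε hε
  have h1 := heq x
  unfold natDensity at h1 ⊢
  have h2 : Filter.Tendsto (fun n : ℕ => (N : ℝ) / (n : ℝ)) Filter.atTop (nhds 0) :=
    tendsto_const_div_atTop_nhds_zero_nat (N : ℝ)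
  have h3 := h1.add h2
  rw [add_zero] at h3
  refine squeeze_zero (fun n => by positivity) (fun n => ?_) h3
  rw [← add_div]
  apply div_le_div_of_nonneg_right _ (Nat.cast_nonneg n)
  have hsub : (Finset.range n).filter (fun k => k ∈ {k : ℕ | r + ε ≤ |f k x - F x|}) ⊆
      (Finset.range n).filter (fun k => k ∈ {k : ℕ | f k x ≠ g k x}) ∪ Finset.range N := by
    intro k hk
    simp only [Finset.mem_filter, Finset.mem_union, Finset.mem_range, Set.mem_setOf_eq] at hk ⊢
    by_cases hkN : k < N
    · exact Or.inr hkN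
    · refine Or.inl ⟨hk.1, fun h => ?_⟩
      have := hN k (not_lt.mp hkN)
      rw [← h] at this
      exact absurd hk.2 (not_le.mpr this)
  have hc := (Finset.card_le_card hsub).trans (Finset.card_union_le _ _)
  rw [Finset.card_range] at hc
  exact_mod_cast hc
end
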